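/- Let v1,...,v8 ∈ ℝ³ and let V be the 3×8 matrix with columns v1,...,v8. Let p lie in the convex hull of {v1,...,v8} and assume that every entry of V − p·(1,...,1) is nonzero and that the sign of the k-th coordinate of v_i − p equals s_{k,i}, where the sign matrix s is: row 1 = (+,+,+,+,−,−,−,−), row 2 = (+,+,−,−,+,+,−,−), row 3 = (+,−,−,+,+,−,−,+). Then the 8×8 matrix M(p) whose rows are: (1,1,1,1,1,1,1,1); the three rows of V; the three rows of Δ(p); and the row d(p)ᵀ = (d1, −d2, d3, −d4, −d5, d6, −d7, d8), is such that the linear system M(p)φ = (1, p1, p2, p3, 0, 0, 0, 0) has a unique solution φ ∈ ℝ⁸, and this solution is componentwise nonnegative. -/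

import Mathlib

open Matrix

/-- Sign pattern of the entries of `V - p` assumed in the hexahedron theorem:
row 1 = (+,+,+,+,-,-,-,-), row 2 = (+,+,-,-,+,+,-,-), row 3 = (+,-,-,+,+,-,-,+). -/
def hexSign : Matrix (Fin 3) (Fin 8) ℝ :=
  !![1, 1, 1, 1, -1, -1, -1, -1;
     1, 1, -1, -1, 1, 1, -1, -1;
     1, -1, -1, 1, 1, -1, -1, 1]

/-- Partial distance `δ_i(p)` in the coordinate plane omitting coordinate `k`:
the distance between the projections of `v i` and `p` onto that plane. -/
noncomputable def partialDist (v : Fin 8 → EuclideanSpace ℝ (Fin 3))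
    (p : EuclideanSpace ℝ (Fin 3)) (k1 k2 : Fin 3) (i : Fin 8) : ℝ :=
  Real.sqrt ((v i k1 - p k1) ^ 2 + (v i k2 - p k2) ^ 2)

/-- The 8×8 moment matrix `M(p)` of the hexahedron: rows are the all-ones row, the
three coordinate rows of `V`, the three rows of the signed partial-distance matrix
`Δ(p)`, and the signed distance row `d(p)ᵀ`. -/
noncomputable def hexMomentMatrix (v : Fin 8 → EuclideanSpace ℝ (Fin 3))
    (p : EuclideanSpace ℝ (Fin 3)) : Matrix (Fin 8) (Fin 8) ℝ :=
  Matrix.of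
    ![fun _ => (1 : ℝ),
      fun i => v i 0,
      fun i => v i 1,
      fun i => v i 2,
      fun i => ![(1 : ℝ), -1, 1, -1, 1, -1, 1, -1] i * partialDist v p 1 2 i,
      fun i => ![(1 : ℝ), -1, -1, 1, -1, 1, 1, -1] i * partialDist v p 0 2 i,
      fun i => ![(1 : ℝ), 1, -1, -1, -1, -1, 1, 1] i * partialDist v p 0 1 i,
      fun i => ![(1 : ℝ), -1, 1, -1, -1, 1, -1, 1] i * ‖v i - p‖]

/-! For a combination `z` of the rows of `M(p)`, with coordinates taken relative to `p` and `z` read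
as the coefficients of a multilinear polynomial on the cube of sign patterns, let `τ` be a vertex
where this polynomial is largest. The formula
`C * s ^ α = ∫ t in (0, ∞), (1 - exp (-s * t)) * t ^ (-1 - α)`
with `α = 1 / 2` and `s = ∑ k ∈ T, (v i k - p k) ^ 2` turns the distances into an average: the
`i`-th entry of `z ᵥ* M(p)`, for the point `v i` in the orthant of `τ`, exceeds the coefficient of
the row of ones by an average of the differences between the value at `τ` and the values at the
interior points `τ k * exp (-(v i k - p k) ^ 2 * t)`. A multilinear polynomial at an interior point
is a mean, with positive weights, of its values at the vertices, so these differences are positive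
unless the polynomial is constant. By duality the system is invertible and its solution is
nonnegative. No step depends on the dimension. -/

section SubordinationFormula

open MeasureTheory Set Real

variable {α : ℝ}

lemma setIntegral_pos_of_forall_pos {X : Type*} [MeasurableSpace X] {μ : Measure X} {s : Set X}
    {f : X → ℝ} (hs : MeasurableSet s) (hμ : μ s ≠ 0) (hf : IntegrableOn f s μ)
    (hpos : ∀ x ∈ s, 0 < f x) : 0 < ∫ x in s, f x ∂μ := by
  rw [setIntegral_pos_iff_support_of_nonneg_ae
    (ae_restrict_of_forall_mem hs fun x hx => (hpos x hx).le) hf,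
    inter_eq_right.2 fun x hx => Function.mem_support.2 (hpos x hx).ne']
  exact pos_iff_ne_zero.2 hμ

lemma integrableOn_one_sub_exp_neg_mul_rpow (h₀ : 0 < α) (h₁ : α < 1) :
    IntegrableOn (fun t : ℝ => (1 - exp (-t)) * t ^ (-1 - α)) (Ioi 0) := by
  have hmeas : AEStronglyMeasurable (fun t : ℝ => (1 - exp (-t)) * t ^ (-1 - α)) :=
    (by fun_prop : Measurable _).aestronglyMeasurable
  have hnear : IntegrableOn (fun t : ℝ => (1 - exp (-t)) * t ^ (-1 - α)) (Ioc 0 1) := by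
    have hint : IntegrableOn (fun t : ℝ => t ^ (-α)) (Ioc 0 1) :=
      (intervalIntegrable_iff_integrableOn_Ioc_of_le zero_le_one).1
        (intervalIntegral.intervalIntegrable_rpow' (by linarith))
    refine hint.mono' hmeas.restrict (ae_restrict_of_forall_mem measurableSet_Ioc fun t ht => ?_)
    have hexp : exp (-t) ≤ 1 := exp_le_one_iff.2 (by linarith [ht.1])
    calc ‖(1 - exp (-t)) * t ^ (-1 - α)‖
        = (1 - exp (-t)) * t ^ (-1 - α) :=
          norm_of_nonneg (mul_nonneg (by linarith) (rpow_nonneg ht.1.le _))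
      _ ≤ t * t ^ (-1 - α) :=
          mul_le_mul_of_nonneg_right (by linarith [one_sub_le_exp_neg t]) (rpow_nonneg ht.1.le _)
      _ = t ^ (-α) := by rw [← rpow_one_add' ht.1.le (by linarith)]; ring_nf
  have hfar : IntegrableOn (fun t : ℝ => (1 - exp (-t)) * t ^ (-1 - α)) (Ioi 1) := by
    refine (integrableOn_Ioi_rpow_of_lt (a := -1 - α) (by linarith) one_pos).mono' hmeas.restrict
      (ae_restrict_of_forall_mem measurableSet_Ioi fun t ht => ?_)
    have ht₀ : (0 : ℝ) < t := one_pos.trans ht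
    have hexp : exp (-t) ≤ 1 := exp_le_one_iff.2 (by linarith)
    rw [norm_of_nonneg (mul_nonneg (by linarith) (rpow_nonneg ht₀.le _))]
    exact mul_le_of_le_one_left (rpow_nonneg ht₀.le _) (by linarith [exp_pos (-t)])
  rw [← Ioc_union_Ioi_eq_Ioi zero_le_one]
  exact hnear.union hfar

lemma one_sub_exp_neg_mul_rpow_scale {s t : ℝ} (hs : 0 < s) (ht : 0 < t) :
    (1 - exp (-(s * t))) * t ^ (-1 - α) =
      s ^ (1 + α) * ((1 - exp (-(s * t))) * (s * t) ^ (-1 - α)) := by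
  rw [mul_rpow hs.le ht.le, show (-1 - α) = -(1 + α) by ring, rpow_neg hs.le]
  field_simp

lemma exists_mul_rpow_eq_integral_one_sub_exp (h₀ : 0 < α) (h₁ : α < 1) :
    ∃ C : ℝ, 0 < C ∧ ∀ s : ℝ, 0 ≤ s →
      IntegrableOn (fun t : ℝ => (1 - exp (-(s * t))) * t ^ (-1 - α)) (Ioi 0) ∧
      C * s ^ α = ∫ t in Ioi (0 : ℝ), (1 - exp (-(s * t))) * t ^ (-1 - α) := by
  have hint := integrableOn_one_sub_exp_neg_mul_rpow h₀ h₁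
  refine ⟨∫ t in Ioi (0 : ℝ), (1 - exp (-t)) * t ^ (-1 - α),
    setIntegral_pos_of_forall_pos measurableSet_Ioi (by simp) hint fun t ht => ?_, fun s hs => ?_⟩
  · exact mul_pos (sub_pos.2 (exp_lt_one_iff.2 (neg_lt_zero.2 ht))) (rpow_pos_of_pos ht _)
  obtain rfl | hs := hs.eq_or_lt
  · simp [zero_rpow h₀.ne']
  have hscale : EqOn (fun t => s ^ (1 + α) * ((1 - exp (-(s * t))) * (s * t) ^ (-1 - α)))
      (fun t => (1 - exp (-(s * t))) * t ^ (-1 - α)) (Ioi 0) := fun t ht =>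
    (one_sub_exp_neg_mul_rpow_scale hs ht).symm
  refine ⟨IntegrableOn.congr_fun (Integrable.const_mul ((integrableOn_Ioi_comp_mul_left_iff
    (fun t => (1 - exp (-t)) * t ^ (-1 - α)) 0 hs).2 (by rwa [mul_zero])) _) hscale
    measurableSet_Ioi, ?_⟩
  rw [← setIntegral_congr_fun measurableSet_Ioi hscale, integral_const_mul,
    integral_comp_mul_left_Ioi (fun t => (1 - exp (-t)) * t ^ (-1 - α)) 0 hs, mul_zero,
    smul_eq_mul, rpow_add hs, rpow_one]
  field_simp

end SubordinationFormula

section Walsh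

open Finset

variable {κ : Type*} [Fintype κ] [DecidableEq κ]

variable (κ) in
/-- The vertices of the cube `[-1, 1]^κ`, i.e. the possible sign patterns of a vector with no zero
coordinate. -/
noncomputable def signVectors : Finset (κ → ℝ) := Fintype.piFinset fun _ => {1, -1}

lemma mem_signVectors {s : κ → ℝ} : s ∈ signVectors κ ↔ ∀ k, s k = 1 ∨ s k = -1 := by
  simp [signVectors]

lemma one_mem_signVectors : 1 ∈ signVectors κ := mem_signVectors.2 fun _ => .inl rfl

lemma card_signVectors : #(signVectors κ) = 2 ^ Fintype.card κ := by
  have hpair : #({1, -1} : Finset ℝ) = 2 := card_pair (by norm_num)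
  simp only [signVectors, Fintype.card_piFinset, hpair, prod_const, card_univ]

/-- The multilinear polynomial with coefficients `c`: on `signVectors κ` it is the function with
Walsh coefficients `c`, elsewhere the multilinear extension of that function. -/
def walshPoly (c : Finset κ → ℝ) (q : κ → ℝ) : ℝ := ∑ T, c T * ∏ k ∈ T, q k

/-- The probability of the vertex `s` under the product measure on `signVectors κ` whose mean is the
point `q` of the cube. -/
noncomputable def vertexWeight (q s : κ → ℝ) : ℝ := ∏ k, (1 + q k * s k) / 2

lemma vertexWeight_pos {q s : κ → ℝ} (hq : ∀ k, |q k| < 1) (hs : s ∈ signVectors κ) :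
    0 < vertexWeight q s := by
  refine prod_pos fun k _ => ?_
  have := abs_lt.1 (hq k)
  rcases mem_signVectors.1 hs k with h | h <;> rw [h] <;> linarith

lemma sum_vertexWeight_mul_prod (q : κ → ℝ) (T : Finset κ) :
    ∑ s ∈ signVectors κ, vertexWeight q s * ∏ k ∈ T, s k = ∏ k ∈ T, q k := by
  calc ∑ s ∈ signVectors κ, vertexWeight q s * ∏ k ∈ T, s k
      = ∑ s ∈ signVectors κ, ∏ k, (1 + q k * s k) / 2 * (if k ∈ T then s k else 1) := by
        simp only [vertexWeight, prod_mul_distrib, prod_ite_mem, univ_inter]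
    _ = ∏ k, ∑ r ∈ {1, -1}, (1 + q k * r) / 2 * (if k ∈ T then r else 1) :=
        sum_prod_piFinset {1, -1} fun k r => (1 + q k * r) / 2 * (if k ∈ T then r else 1)
    _ = ∏ k, if k ∈ T then q k else 1 := by
        refine prod_congr rfl fun k _ => ?_
        rw [sum_pair (by norm_num)]
        split_ifs <;> ring
    _ = ∏ k ∈ T, q k := by rw [prod_ite_mem, univ_inter]

lemma sum_vertexWeight (q : κ → ℝ) : ∑ s ∈ signVectors κ, vertexWeight q s = 1 := by
  simpa using sum_vertexWeight_mul_prod q ∅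

lemma walshPoly_eq_sum_vertexWeight (c : Finset κ → ℝ) (q : κ → ℝ) :
    walshPoly c q = ∑ s ∈ signVectors κ, vertexWeight q s * walshPoly c s := by
  simp only [walshPoly, mul_sum, mul_left_comm (vertexWeight q _)]
  rw [sum_comm]
  simp only [← mul_sum, sum_vertexWeight_mul_prod]

lemma walshPoly_lt_of_forall_le {c : Finset κ → ℝ} {q : κ → ℝ} {m : ℝ} (hq : ∀ k, |q k| < 1)
    (hle : ∀ s ∈ signVectors κ, walshPoly c s ≤ m)
    (hlt : ∃ s ∈ signVectors κ, walshPoly c s < m) : walshPoly c q < m := by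
  obtain ⟨s₀, hs₀, hlt⟩ := hlt
  calc walshPoly c q = ∑ s ∈ signVectors κ, vertexWeight q s * walshPoly c s :=
        walshPoly_eq_sum_vertexWeight c q
    _ < ∑ s ∈ signVectors κ, vertexWeight q s * m :=
        sum_lt_sum (fun s hs => mul_le_mul_of_nonneg_left (hle s hs) (vertexWeight_pos hq hs).le)
          ⟨s₀, hs₀, mul_lt_mul_of_pos_left hlt (vertexWeight_pos hq hs₀)⟩
    _ = m := by rw [← sum_mul, sum_vertexWeight, one_mul]

lemma walshPoly_indicator (c : Finset κ → ℝ) (T : Finset κ) :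
    walshPoly c (fun k => if k ∈ T then 1 else 0) = ∑ U ∈ T.powerset, c U := by
  have hfilter : ({U | U ⊆ T} : Finset (Finset κ)) = T.powerset := by ext; simp
  simp [walshPoly, prod_ite_zero, ← subset_iff, sum_ite, hfilter]

lemma eq_zero_of_walshPoly_const {c : Finset κ → ℝ} {m : ℝ}
    (hconst : ∀ s ∈ signVectors κ, walshPoly c s = m) {T : Finset κ} (hT : T.Nonempty) :
    c T = 0 := by
  have hpowerset (U : Finset κ) : ∑ W ∈ U.powerset, c W = m := by
    rw [← walshPoly_indicator, walshPoly_eq_sum_vertexWeight,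
      sum_congr rfl fun s hs => by rw [hconst s hs], ← sum_mul, sum_vertexWeight, one_mul]
  have hempty : c ∅ = m := by simpa using hpowerset ∅
  induction T using Finset.strongInduction with
  | H T ih =>
    have hproper : ∑ W ∈ T.ssubsets, c W = c ∅ :=
      sum_eq_single_of_mem ∅ (empty_mem_ssubsets hT) fun W hW hne =>
        ih W (mem_ssubsets.1 hW) (nonempty_iff_ne_empty.2 hne)
    have hsplit : c T + ∑ W ∈ T.ssubsets, c W = m := by
      rw [ssubsets, add_sum_erase _ _ (mem_powerset_self T), hpowerset]
    linarith

end Walsh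

section WeightedWalsh

open Finset MeasureTheory Real

variable {κ : Type*} [Fintype κ]

lemma exists_sum_mul_rpow_eq_integral_walshPoly_sub {α : ℝ} (h₀ : 0 < α) (h₁ : α < 1) :
    ∃ C : ℝ, 0 < C ∧ ∀ (c : Finset κ → ℝ) (τ a : κ → ℝ), (∀ k, 0 ≤ a k) →
      IntegrableOn (fun t : ℝ => (walshPoly c τ - walshPoly c fun k => τ k * exp (-(a k * t))) *
        t ^ (-1 - α)) (Set.Ioi 0) ∧
      C * ∑ T, c T * ((∏ k ∈ T, τ k) * (∑ k ∈ T, a k) ^ α) =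
        ∫ t in Set.Ioi (0 : ℝ), (walshPoly c τ - walshPoly c fun k => τ k * exp (-(a k * t))) *
          t ^ (-1 - α) := by
  obtain ⟨C, hC, hrep⟩ := exists_mul_rpow_eq_integral_one_sub_exp h₀ h₁
  refine ⟨C, hC, fun c τ a ha => ?_⟩
  have hrep_sum (T : Finset κ) := hrep (∑ k ∈ T, a k) (sum_nonneg fun k _ => ha k)
  have hprod (t : ℝ) (T : Finset κ) : ∏ k ∈ T, τ k * exp (-(a k * t)) =
      (∏ k ∈ T, τ k) * exp (-((∑ k ∈ T, a k) * t)) := by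
    rw [prod_mul_distrib, ← exp_sum, sum_neg_distrib, sum_mul]
  have hintegrand (t : ℝ) :
      (walshPoly c τ - walshPoly c fun k => τ k * exp (-(a k * t))) * t ^ (-1 - α) =
        ∑ T, c T * (∏ k ∈ T, τ k) * ((1 - exp (-((∑ k ∈ T, a k) * t))) * t ^ (-1 - α)) := by
    simp only [walshPoly, hprod, ← sum_sub_distrib, sum_mul]
    exact sum_congr rfl fun T _ => by ring
  have hint (T : Finset κ) := (hrep_sum T).1.const_mul (c T * ∏ k ∈ T, τ k)
  simp only [hintegrand]
  refine ⟨integrable_finsetSum _ fun T _ => hint T, ?_⟩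
  rw [integral_finsetSum _ fun T _ => hint T, mul_sum]
  refine sum_congr rfl fun T _ => ?_
  rw [integral_const_mul, ← (hrep_sum T).2]
  ring

variable [DecidableEq κ]

lemma sum_mul_prod_mul_rpow_pos_of_isMax {α : ℝ} (h₀ : 0 < α) (h₁ : α < 1) {c : Finset κ → ℝ}
    {τ a : κ → ℝ} (hτ : τ ∈ signVectors κ) (ha : ∀ k, 0 < a k)
    (hmax : ∀ s ∈ signVectors κ, walshPoly c s ≤ walshPoly c τ)
    (hc : ∃ T : Finset κ, T.Nonempty ∧ c T ≠ 0) :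
    0 < ∑ T, c T * ((∏ k ∈ T, τ k) * (∑ k ∈ T, a k) ^ α) := by
  have hlt : ∃ s ∈ signVectors κ, walshPoly c s < walshPoly c τ := by
    by_contra! hge
    obtain ⟨T, hT, hcT⟩ := hc
    exact hcT (eq_zero_of_walshPoly_const (fun s hs => (hmax s hs).antisymm (hge s hs)) hT)
  have hinterior {t : ℝ} (ht : 0 < t) (k : κ) : |τ k * exp (-(a k * t))| < 1 := by
    have hτk : |τ k| = 1 := by rcases mem_signVectors.1 hτ k with h | h <;> simp [h]
    rw [abs_mul, hτk, one_mul, abs_exp, exp_lt_one_iff, neg_lt_zero]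
    exact mul_pos (ha k) ht
  obtain ⟨C, hC, hrep⟩ := exists_sum_mul_rpow_eq_integral_walshPoly_sub (κ := κ) h₀ h₁
  obtain ⟨hint, hintegral⟩ := hrep c τ a fun k => (ha k).le
  refine pos_of_mul_pos_right ?_ hC.le
  rw [hintegral]
  exact setIntegral_pos_of_forall_pos measurableSet_Ioi (by simp) hint fun t ht =>
    mul_pos (sub_pos.2 (walshPoly_lt_of_forall_le (hinterior ht) hmax hlt)) (rpow_pos_of_pos ht _)

end WeightedWalsh

section LinearSystem

variable {K m n : Type*} [Field K] [Fintype m] [Fintype n] {A : Matrix m n K}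

lemma vecMul_surjective_of_injective (hcard : Fintype.card m = Fintype.card n)
    (hinj : Function.Injective A.vecMul) : Function.Surjective A.vecMul :=
  (LinearMap.injective_iff_surjective_of_finrank_eq_finrank (f := A.vecMulLinear)
    (by simpa using hcard)).1 hinj

lemma mulVec_bijective_of_vecMul_injective (hcard : Fintype.card m = Fintype.card n)
    (hinj : Function.Injective A.vecMul) : Function.Bijective A.mulVec := by
  classical
  have hmulVec : Function.Injective A.mulVecLin := by
    refine (injective_iff_map_eq_zero A.mulVecLin).2 fun φ hφ => funext fun j => ?_
    obtain ⟨z, hz : z ᵥ* A = _⟩ := vecMul_surjective_of_injective hcard hinj (Pi.single j 1)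
    calc φ j = z ᵥ* A ⬝ᵥ φ := by rw [hz, single_one_dotProduct]
      _ = z ⬝ᵥ A *ᵥ φ := (dotProduct_mulVec z A φ).symm
      _ = 0 := by rw [← mulVecLin_apply, hφ, dotProduct_zero]
  exact ⟨hmulVec, (LinearMap.injective_iff_surjective_of_finrank_eq_finrank
    (by simpa using hcard.symm)).1 hmulVec⟩

variable [LinearOrder K] [IsStrictOrderedRing K]

/-- The hypothesis `hdual` is the dual side of Farkas' lemma. -/
lemma nonneg_of_mulVec_eq {b : m → K} (hsurj : Function.Surjective A.vecMul)
    (hdual : ∀ z : m → K, ∃ i, z ⬝ᵥ b ≤ (z ᵥ* A) i) {φ : n → K} (hφ : A *ᵥ φ = b) (j : n) :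
    0 ≤ φ j := by
  classical
  obtain ⟨z, hz : z ᵥ* A = _⟩ := hsurj (-Pi.single j 1)
  obtain ⟨i, hi⟩ := hdual z
  have hsingle : (0 : n → K) ≤ Pi.single j 1 := Pi.single_nonneg.2 zero_le_one
  have hle : -φ j ≤ 0 :=
    calc -φ j = z ᵥ* A ⬝ᵥ φ := by rw [hz, neg_dotProduct, single_one_dotProduct]
      _ = z ⬝ᵥ b := by rw [← dotProduct_mulVec, hφ]
      _ ≤ (z ᵥ* A) i := hi
      _ ≤ 0 := by rw [hz]; exact neg_nonpos.2 (hsingle i)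
  exact neg_nonpos.1 hle

end LinearSystem

section OrthantMoments

open Finset

variable {ι κ : Type*}

/-- The distance between the projections of `v i` and `p` onto the coordinate subspace spanned by
`T`, with the product over `T` of the signs of the coordinates of `v i - p`. -/
noncomputable def signedPartialDist (v : ι → EuclideanSpace ℝ κ) (p : EuclideanSpace ℝ κ)
    (T : Finset κ) (i : ι) : ℝ :=
  (∏ k ∈ T, Real.sign (v i k - p k)) * √(∑ k ∈ T, (v i k - p k) ^ 2)

variable {v : ι → EuclideanSpace ℝ κ} {p : EuclideanSpace ℝ κ}

lemma signedPartialDist_empty (i : ι) : signedPartialDist v p ∅ i = 0 := by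
  simp [signedPartialDist]

variable [DecidableEq κ]

/-- The moment matrix in arbitrary dimension, with a row for each set of coordinates. The row of a
singleton `{k}` is that of the `k`-th coordinates relative to `p`, so that barycentric coordinates
solve the system with right-hand side `Pi.single ∅ 1`. -/
noncomputable def orthantMomentMatrix (v : ι → EuclideanSpace ℝ κ) (p : EuclideanSpace ℝ κ) :
    Matrix (Finset κ) ι ℝ :=
  of fun T i => if T = ∅ then 1 else signedPartialDist v p T i

variable [Fintype κ]

lemma vecMul_orthantMomentMatrix (z : Finset κ → ℝ) (i : ι) :
    (z ᵥ* orthantMomentMatrix v p) i = z ∅ + ∑ T, z T * signedPartialDist v p T i := by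
  have hentry (T : Finset κ) : orthantMomentMatrix v p T i =
      (if T = ∅ then 1 else 0) + signedPartialDist v p T i := by
    rcases eq_or_ne T ∅ with rfl | hT <;> simp [orthantMomentMatrix, signedPartialDist_empty, *]
  simp [vecMul, dotProduct, hentry, mul_add, sum_add_distrib]

lemma ne_zero_of_sign_mem_signVectors {x : κ → ℝ}
    (hx : (fun k => Real.sign (x k)) ∈ signVectors κ) (k : κ) : x k ≠ 0 := fun h => by
  have := mem_signVectors.1 hx k
  norm_num [h] at this

lemma exists_lt_vecMul_orthantMomentMatrix
    (hbij : Set.BijOn (fun i k => Real.sign (v i k - p k)) Set.univ (signVectors κ))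
    {z : Finset κ → ℝ} (hz : ∃ T : Finset κ, T.Nonempty ∧ z T ≠ 0) :
    ∃ i, z ∅ < (z ᵥ* orthantMomentMatrix v p) i := by
  obtain ⟨τ, hτ, hmax⟩ :=
    exists_max_image (signVectors κ) (walshPoly z) ⟨1, one_mem_signVectors⟩
  obtain ⟨i, -, rfl⟩ := hbij.surjOn hτ
  refine ⟨i, ?_⟩
  rw [vecMul_orthantMomentMatrix, lt_add_iff_pos_right]
  simp only [signedPartialDist, Real.sqrt_eq_rpow]
  exact sum_mul_prod_mul_rpow_pos_of_isMax one_half_pos one_half_lt_one hτ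
    (fun k => sq_pos_of_ne_zero (ne_zero_of_sign_mem_signVectors hτ k)) hmax hz

lemma card_finset_eq_card_of_bijOn [Fintype ι]
    (hbij : Set.BijOn (fun i k => Real.sign (v i k - p k)) Set.univ (signVectors κ)) :
    Fintype.card (Finset κ) = Fintype.card ι := by
  rw [Fintype.card_finset, ← card_signVectors, ← card_univ]
  exact (Set.BijOn.finsetCard_eq _ (by rwa [coe_univ])).symm

lemma exists_le_vecMul_orthantMomentMatrix
    (hbij : Set.BijOn (fun i k => Real.sign (v i k - p k)) Set.univ (signVectors κ))
    (z : Finset κ → ℝ) : ∃ i, z ∅ ≤ (z ᵥ* orthantMomentMatrix v p) i := by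
  by_cases hz : ∃ T : Finset κ, T.Nonempty ∧ z T ≠ 0
  · exact (exists_lt_vecMul_orthantMomentMatrix hbij hz).imp fun _ => le_of_lt
  · push Not at hz
    obtain ⟨i, -⟩ := hbij.surjOn one_mem_signVectors
    refine ⟨i, ?_⟩
    rw [vecMul_orthantMomentMatrix, sum_eq_zero fun T _ => ?_, add_zero]
    rcases T.eq_empty_or_nonempty with rfl | hT
    · rw [signedPartialDist_empty, mul_zero]
    · rw [hz T hT, zero_mul]

lemma vecMul_orthantMomentMatrix_injective
    (hbij : Set.BijOn (fun i k => Real.sign (v i k - p k)) Set.univ (signVectors κ)) :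
    Function.Injective (orthantMomentMatrix v p).vecMul := by
  refine (injective_iff_map_eq_zero (orthantMomentMatrix v p).vecMulLinear).2 fun z hz => ?_
  rw [vecMulLinear_apply] at hz
  obtain ⟨i, hi⟩ := exists_le_vecMul_orthantMomentMatrix hbij z
  obtain ⟨j, hj⟩ := exists_le_vecMul_orthantMomentMatrix hbij (-z)
  simp only [neg_vecMul, hz, Pi.neg_apply, Pi.zero_apply, neg_zero, neg_nonpos] at hi hj
  have hnonempty (T : Finset κ) (hT : T.Nonempty) : z T = 0 := by
    by_contra hzT
    obtain ⟨l, hl⟩ := exists_lt_vecMul_orthantMomentMatrix hbij ⟨T, hT, hzT⟩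
    rw [hz, Pi.zero_apply] at hl
    exact hl.not_ge hj
  ext T
  rcases T.eq_empty_or_nonempty with rfl | hT
  · exact hi.antisymm hj
  · exact hnonempty T hT

theorem hex_moment_coordinates_general [Fintype ι]
    (hbij : Set.BijOn (fun i k => Real.sign (v i k - p k)) Set.univ (signVectors κ)) :
    (∃! φ : ι → ℝ, orthantMomentMatrix v p *ᵥ φ = Pi.single ∅ 1) ∧
    ∀ φ : ι → ℝ, orthantMomentMatrix v p *ᵥ φ = Pi.single ∅ 1 → ∀ i, 0 ≤ φ i := by
  have hinj := vecMul_orthantMomentMatrix_injective hbij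
  have hcard := card_finset_eq_card_of_bijOn hbij
  refine ⟨(mulVec_bijective_of_vecMul_injective hcard hinj).existsUnique _, fun φ hφ =>
    nonneg_of_mulVec_eq (vecMul_surjective_of_injective hcard hinj) (fun z => ?_) hφ⟩
  simpa using exists_le_vecMul_orthantMomentMatrix hbij z

end OrthantMoments

section Hexahedron

lemma sign_mul_sqrt_sq (x : ℝ) : Real.sign x * √(x ^ 2) = x := by
  rw [Real.sqrt_sq_eq_abs]
  rcases lt_trichotomy x 0 with hx | rfl | hx
  · rw [Real.sign_of_neg hx, abs_of_neg hx, neg_one_mul, neg_neg]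
  · simp
  · rw [Real.sign_of_pos hx, abs_of_pos hx, one_mul]

lemma hexSign_bijOn :
    Set.BijOn (fun i k => hexSign k i) Set.univ (signVectors (Fin 3)) := by
  have hmem (i : Fin 8) : (fun k => hexSign k i) ∈ signVectors (Fin 3) := by
    refine mem_signVectors.2 fun k => ?_
    fin_cases k <;> fin_cases i <;> simp [hexSign]
  have hmapsTo : Set.MapsTo (fun i k => hexSign k i) ↑(Finset.univ : Finset (Fin 8))
      (signVectors (Fin 3)) := fun i _ => hmem i
  have hsurjOn : Set.SurjOn (fun i k => hexSign k i) ↑(Finset.univ : Finset (Fin 8))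
      (signVectors (Fin 3)) := by
    intro s hs
    obtain ⟨i, h₀, h₁, h₂⟩ : ∃ i, hexSign 0 i = s 0 ∧ hexSign 1 i = s 1 ∧ hexSign 2 i = s 2 := by
      rcases mem_signVectors.1 hs 0 with h₀ | h₀ <;> rcases mem_signVectors.1 hs 1 with h₁ | h₁ <;>
        rcases mem_signVectors.1 hs 2 with h₂ | h₂ <;> rw [h₀, h₁, h₂]
      exacts [⟨0, by simp [hexSign]⟩, ⟨1, by simp [hexSign]⟩, ⟨3, by simp [hexSign]⟩,
        ⟨2, by simp [hexSign]⟩, ⟨4, by simp [hexSign]⟩, ⟨5, by simp [hexSign]⟩,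
        ⟨7, by simp [hexSign]⟩, ⟨6, by simp [hexSign]⟩]
    refine ⟨i, Finset.mem_coe.2 (Finset.mem_univ i), funext fun k => ?_⟩
    fin_cases k <;> assumption
  rw [← Finset.coe_univ]
  exact ⟨hmapsTo, Finset.injOn_of_surjOn_of_card_le _ hmapsTo hsurjOn (by simp [card_signVectors]),
    hsurjOn⟩

/-- The set of coordinates to which each row of `hexMomentMatrix` corresponds. -/
def hexRowSupport : Fin 8 → Finset (Fin 3) :=
  ![∅, {0}, {1}, {2}, {1, 2}, {0, 2}, {0, 1}, {0, 1, 2}]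

lemma hexRowSupport_surjective : Function.Surjective hexRowSupport := by decide

variable {v : Fin 8 → EuclideanSpace ℝ (Fin 3)} {p : EuclideanSpace ℝ (Fin 3)}

lemma hexMomentMatrix_apply
    (hsgn : ∀ (k : Fin 3) (i : Fin 8), Real.sign (v i k - p k) = hexSign k i) (j i : Fin 8) :
    hexMomentMatrix v p j i = orthantMomentMatrix v p (hexRowSupport j) i +
      (![0, p 0, p 1, p 2, 0, 0, 0, 0] : Fin 8 → ℝ) j := by
  let σ (k : Fin 3) : ℝ := Real.sign (v i k - p k)
  have h₁₂ : (![1, -1, 1, -1, 1, -1, 1, -1] : Fin 8 → ℝ) i = σ 1 * σ 2 := by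
    simp only [σ, hsgn]
    fin_cases i <;> simp [hexSign]
  have h₀₂ : (![1, -1, -1, 1, -1, 1, 1, -1] : Fin 8 → ℝ) i = σ 0 * σ 2 := by
    simp only [σ, hsgn]
    fin_cases i <;> simp [hexSign]
  have h₀₁ : (![1, 1, -1, -1, -1, -1, 1, 1] : Fin 8 → ℝ) i = σ 0 * σ 1 := by
    simp only [σ, hsgn]
    fin_cases i <;> simp [hexSign]
  have h₀₁₂ : (![1, -1, 1, -1, -1, 1, -1, 1] : Fin 8 → ℝ) i = σ 0 * σ 1 * σ 2 := by
    simp only [σ, hsgn]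
    fin_cases i <;> simp [hexSign]
  fin_cases j <;>
    simp [hexMomentMatrix, orthantMomentMatrix, hexRowSupport, signedPartialDist, partialDist,
      sign_mul_sqrt_sq, EuclideanSpace.norm_eq, Fin.sum_univ_three, h₁₂, h₀₂, h₀₁, h₀₁₂, σ,
      mul_assoc, add_assoc]

lemma hexMomentMatrix_mulVec_eq_iff
    (hsgn : ∀ (k : Fin 3) (i : Fin 8), Real.sign (v i k - p k) = hexSign k i) {φ : Fin 8 → ℝ} :
    hexMomentMatrix v p *ᵥ φ = ![1, p 0, p 1, p 2, 0, 0, 0, 0] ↔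
      orthantMomentMatrix v p *ᵥ φ = Pi.single ∅ 1 := by
  set b : Fin 8 → ℝ := ![0, p 0, p 1, p 2, 0, 0, 0, 0] with hb
  have hsum : ∑ i, φ i = (orthantMomentMatrix v p *ᵥ φ) ∅ := by
    simp [mulVec, dotProduct, orthantMomentMatrix]
  have hlhs (j : Fin 8) : (hexMomentMatrix v p *ᵥ φ) j =
      (orthantMomentMatrix v p *ᵥ φ) (hexRowSupport j) +
        b j * (orthantMomentMatrix v p *ᵥ φ) ∅ := by
    rw [← hsum]
    simp [mulVec, dotProduct, hexMomentMatrix_apply hsgn, add_mul, Finset.sum_add_distrib,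
      Finset.mul_sum, hb]
  have hrhs (j : Fin 8) : (![1, p 0, p 1, p 2, 0, 0, 0, 0] : Fin 8 → ℝ) j =
      (Pi.single ∅ 1 : Finset (Fin 3) → ℝ) (hexRowSupport j) + b j := by
    fin_cases j <;> simp [hexRowSupport, hb]
  simp only [funext_iff, hlhs, hrhs, hexRowSupport_surjective.forall]
  refine ⟨fun h => ?_, fun h j => ?_⟩
  · have hempty : (orthantMomentMatrix v p *ᵥ φ) ∅ = 1 := by
      simpa [hexRowSupport, hb] using h 0
    simpa [hempty] using h
  · have hempty : (orthantMomentMatrix v p *ᵥ φ) ∅ = 1 := by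
      simpa [hexRowSupport] using h 0
    rw [h j, hempty, mul_one]

end Hexahedron

/-- Let `v₁,…,v₈ ∈ ℝ³`, let `p` lie in their convex hull, and assume every
entry of `V - p𝟙ᵀ` is nonzero with the prescribed sign pattern. Then the linear system
`M(p)φ = (1, p₁, p₂, p₃, 0, 0, 0, 0)` has a unique solution `φ ∈ ℝ⁸`, and this solution
is componentwise nonnegative. -/
theorem hex_moment_coordinates (v : Fin 8 → EuclideanSpace ℝ (Fin 3))
    (p : EuclideanSpace ℝ (Fin 3)) (hp : p ∈ convexHull ℝ (Set.range v))
    (hnz : ∀ (k : Fin 3) (i : Fin 8), v i k - p k ≠ 0)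
    (hsgn : ∀ (k : Fin 3) (i : Fin 8), Real.sign (v i k - p k) = hexSign k i) :
    (∃! φ : Fin 8 → ℝ,
        (hexMomentMatrix v p).mulVec φ = ![1, p 0, p 1, p 2, 0, 0, 0, 0]) ∧
    ∀ φ : Fin 8 → ℝ,
      (hexMomentMatrix v p).mulVec φ = ![1, p 0, p 1, p 2, 0, 0, 0, 0] →
      ∀ i, 0 ≤ φ i := by
  simp only [hexMomentMatrix_mulVec_eq_iff hsgn]
  exact hex_moment_coordinates_general (by simpa only [hsgn] using hexSign_bijOn)
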